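/- arXiv:0808.2476 — 2 statements merged into one kernel-verified Lean document; each statement's English description precedes it below -/
import Mathlib

section
/- Let n ≥ 1, let R ≥ 1 be a real number, and let C_R^n = {x ∈ ℝ^n : max_{1≤i≤n} |x_i| ≤ R} be the cube of side-length 2R centered at the origin. Let Λ be a lattice of full rank in ℝ^n of determinant Δ such that there exist a positive constant c and an upper-triangular basis matrix A = (a_{ij}) of Λ whose diagonal entries satisfy a_{ii} ≥ c for all 1 ≤ i ≤ n. Assume 2R ≥ max{Δ/c^{n−1}, c}. Then for every point z ∈ ℝ^n, (2Rc^{n−1}/Δ − 1)(2R/c − 1)^{n−1} ≤ |Λ ∩ (C_R^n + z)| ≤ (2Rc^{n−1}/Δ + 1)(2R/c + 1)^{n−1}. -/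
/-!
Back substitution: once the last `n - 1` integer coordinates of a lattice point are fixed, the first
one ranges over the integers in an interval of length `2R / a₁₁`, of which there are `⌊2R / a₁₁⌋` or
`⌊2R / a₁₁⌋ + 1`. Hence the count lies between `∏ ⌊2R / aᵢᵢ⌋` and `∏ (⌊2R / aᵢᵢ⌋ + 1)`.
With `u = 2R / c` and `yᵢ = c / aᵢᵢ ≤ 1`, so that `u ∏ yᵢ = 2R c ^ (n - 1) / Δ`, these products are
compared with the stated bounds by moving the mass of `y` onto one index: both
`(u * a - 1) * (u * b - 1) - (u * (a * b) - 1) * (u - 1)` and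
`(u * (a * b) + 1) * (u + 1) - (u * a + 1) * (u * b + 1)` equal `u * ((1 - a) * (1 - b))`.
-/

section ProductInequalities

variable {ι K : Type*} [CommRing K] [LinearOrder K] [IsStrictOrderedRing K]
  {s : Finset ι} {u : K} {y f : ι → K}

theorem mul_prod_sub_one_mul_pow_le_prod (hu : 1 ≤ u) (hs : s.Nonempty)
    (hy₀ : ∀ i ∈ s, 0 ≤ y i) (hy₁ : ∀ i ∈ s, y i ≤ 1)
    (hf₀ : ∀ i ∈ s, 0 ≤ f i) (hf : ∀ i ∈ s, u * y i - 1 ≤ f i) :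
    (u * ∏ i ∈ s, y i - 1) * (u - 1) ^ (s.card - 1) ≤ ∏ i ∈ s, f i := by
  induction hs using Finset.Nonempty.cons_induction with
  | singleton i => simpa using hf
  | cons i s hi hs ih =>
    simp only [Finset.forall_mem_cons] at hy₀ hy₁ hf₀ hf
    rw [Finset.prod_cons, Finset.prod_cons, Finset.card_cons, Nat.add_sub_cancel,
      ← Nat.sub_add_cancel hs.card_pos, pow_succ']
    have ih := ih hy₀.2 hy₁.2 hf₀.2 hf.2
    have hY₁ : ∏ j ∈ s, y j ≤ 1 := Finset.prod_le_one hy₀.2 hy₁.2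
    set Y := ∏ j ∈ s, y j
    have hpow : ∀ k : ℕ, 0 ≤ (u - 1) ^ k := pow_nonneg (sub_nonneg.2 hu)
    rcases le_total (u * (y i * Y)) 1 with hsmall | hlarge
    · calc (u * (y i * Y) - 1) * ((u - 1) * (u - 1) ^ (s.card - 1)) ≤ 0 :=
          mul_nonpos_of_nonpos_of_nonneg (sub_nonpos.2 hsmall) (pow_succ' (u - 1) _ ▸ hpow _)
        _ ≤ f i * ∏ j ∈ s, f j := mul_nonneg hf₀.1 (Finset.prod_nonneg hf₀.2)
    · have hyi : 1 ≤ u * y i := hlarge.trans <| mul_le_mul_of_nonneg_left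
        (mul_le_of_le_one_right hy₀.1 hY₁) (zero_le_one.trans hu)
      have hgap : 0 ≤ u * ((1 - y i) * (1 - Y)) := mul_nonneg (zero_le_one.trans hu) <|
        mul_nonneg (sub_nonneg.2 hy₁.1) (sub_nonneg.2 hY₁)
      calc (u * (y i * Y) - 1) * ((u - 1) * (u - 1) ^ (s.card - 1))
          = (u * (y i * Y) - 1) * (u - 1) * (u - 1) ^ (s.card - 1) := by ring
        _ ≤ (u * y i - 1) * (u * Y - 1) * (u - 1) ^ (s.card - 1) :=
          mul_le_mul_of_nonneg_right (by linarith) (hpow _)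
        _ = (u * y i - 1) * ((u * Y - 1) * (u - 1) ^ (s.card - 1)) := by ring
        _ ≤ (u * y i - 1) * ∏ j ∈ s, f j := mul_le_mul_of_nonneg_left ih (sub_nonneg.2 hyi)
        _ ≤ f i * ∏ j ∈ s, f j := mul_le_mul_of_nonneg_right hf.1 (Finset.prod_nonneg hf₀.2)

theorem prod_le_mul_prod_add_one_mul_pow (hu : 0 ≤ u) (hs : s.Nonempty)
    (hy₀ : ∀ i ∈ s, 0 ≤ y i) (hy₁ : ∀ i ∈ s, y i ≤ 1)
    (hf₀ : ∀ i ∈ s, 0 ≤ f i) (hf : ∀ i ∈ s, f i ≤ u * y i + 1) :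
    ∏ i ∈ s, f i ≤ (u * ∏ i ∈ s, y i + 1) * (u + 1) ^ (s.card - 1) := by
  induction hs using Finset.Nonempty.cons_induction with
  | singleton i => simpa using hf
  | cons i s hi hs ih =>
    simp only [Finset.forall_mem_cons] at hy₀ hy₁ hf₀ hf
    rw [Finset.prod_cons, Finset.prod_cons, Finset.card_cons, Nat.add_sub_cancel,
      ← Nat.sub_add_cancel hs.card_pos, pow_succ']
    have ih := ih hy₀.2 hy₁.2 hf₀.2 hf.2
    have hY₁ : ∏ j ∈ s, y j ≤ 1 := Finset.prod_le_one hy₀.2 hy₁.2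
    set Y := ∏ j ∈ s, y j
    have hgap : 0 ≤ u * ((1 - y i) * (1 - Y)) :=
      mul_nonneg hu <| mul_nonneg (sub_nonneg.2 hy₁.1) (sub_nonneg.2 hY₁)
    calc f i * ∏ j ∈ s, f j
        ≤ (u * y i + 1) * ((u * Y + 1) * (u + 1) ^ (s.card - 1)) :=
          mul_le_mul hf.1 ih (Finset.prod_nonneg hf₀.2) (hf₀.1.trans hf.1)
      _ = (u * y i + 1) * (u * Y + 1) * (u + 1) ^ (s.card - 1) := by ring
      _ ≤ (u * (y i * Y) + 1) * (u + 1) * (u + 1) ^ (s.card - 1) :=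
          mul_le_mul_of_nonneg_right (by linarith) (pow_nonneg (by linarith) _)
      _ = (u * (y i * Y) + 1) * ((u + 1) * (u + 1) ^ (s.card - 1)) := by ring

end ProductInequalities

section FibreCounting

variable {α : Type*} {β : α → Type*} [Finite α] [∀ a, Finite (β a)] {b : ℕ}

theorem mul_card_le_card_sigma (h : ∀ a, b ≤ Nat.card (β a)) :
    b * Nat.card α ≤ Nat.card (Σ a, β a) := by
  have := Fintype.ofFinite α
  rw [Nat.card_sigma, Nat.card_eq_fintype_card, mul_comm]
  exact Finset.card_nsmul_le_sum _ _ _ fun a _ => h a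

theorem card_sigma_le_mul_card (h : ∀ a, Nat.card (β a) ≤ b) :
    Nat.card (Σ a, β a) ≤ b * Nat.card α := by
  have := Fintype.ofFinite α
  rw [Nat.card_sigma, Nat.card_eq_fintype_card, mul_comm]
  exact Finset.sum_le_card_nsmul _ _ _ fun a _ => h a

end FibreCounting

section IntegersInInterval

variable {K : Type*} [CommRing K] [LinearOrder K] [IsStrictOrderedRing K] [FloorRing K]

theorem floor_sub_le_card_Icc_ceil_floor (x y : K) :
    ⌊y - x⌋₊ ≤ (Finset.Icc ⌈x⌉ ⌊y⌋).card := by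
  have hfloor : ⌊y - x⌋ + ⌈x⌉ - 1 ≤ ⌊y⌋ := by
    rw [Int.le_floor]
    push_cast
    linarith [Int.floor_le (y - x), Int.ceil_lt_add_one x]
  rw [Int.card_Icc, ← Int.floor_toNat]
  exact Int.toNat_le_toNat (by linarith)

theorem card_Icc_ceil_floor_le_floor_sub_add_one (x y : K) :
    (Finset.Icc ⌈x⌉ ⌊y⌋).card ≤ ⌊y - x⌋₊ + 1 := by
  have hfloor : ⌊y⌋ - ⌈x⌉ ≤ ⌊y - x⌋ := by
    rw [Int.le_floor]
    push_cast
    linarith [Int.floor_le y, Int.le_ceil x]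
  rw [Int.card_Icc, ← Int.floor_toNat]
  omega

end IntegersInInterval

section IntegersInAffinePreimage

variable {K : Type*} [Field K] [LinearOrder K] [IsStrictOrderedRing K] [FloorRing K] {a : K}

theorem setOf_mul_intCast_add_mem_Icc (ha : 0 < a) (w l r : K) :
    {k : ℤ | a * k + w ∈ Set.Icc l r} = Finset.Icc ⌈(l - w) / a⌉ ⌊(r - w) / a⌋ := by
  ext k
  simp only [Set.mem_ofPred_eq, Set.mem_Icc, Finset.coe_Icc, Int.ceil_le, Int.le_floor,
    div_le_iff₀' ha, le_div_iff₀' ha, sub_le_iff_le_add, le_sub_iff_add_le]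

theorem finite_setOf_mul_intCast_add_mem_Icc (ha : 0 < a) (w l r : K) :
    {k : ℤ | a * k + w ∈ Set.Icc l r}.Finite := by
  rw [setOf_mul_intCast_add_mem_Icc ha]
  exact Finset.finite_toSet _

theorem floor_le_ncard_setOf_mul_intCast_add_mem_Icc (ha : 0 < a) (w l r : K) :
    ⌊(r - l) / a⌋₊ ≤ {k : ℤ | a * k + w ∈ Set.Icc l r}.ncard := by
  rw [setOf_mul_intCast_add_mem_Icc ha, Set.ncard_coe_finset, ← sub_sub_sub_cancel_right r l w,
    sub_div (r - w)]
  exact floor_sub_le_card_Icc_ceil_floor _ _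

theorem ncard_setOf_mul_intCast_add_mem_Icc_le (ha : 0 < a) (w l r : K) :
    {k : ℤ | a * k + w ∈ Set.Icc l r}.ncard ≤ ⌊(r - l) / a⌋₊ + 1 := by
  rw [setOf_mul_intCast_add_mem_Icc ha, Set.ncard_coe_finset, ← sub_sub_sub_cancel_right r l w,
    sub_div (r - w)]
  exact card_Icc_ceil_floor_le_floor_sub_add_one _ _

end IntegersInAffinePreimage

/-- The vector with integer coordinates `m` in the basis formed by the columns of `A`. The lattice
spanned by these columns is `Set.range (latticeVec A)`. -/
def latticeVec {ι κ K : Type*} [Fintype κ] [Ring K] (A : Matrix ι κ K) (m : κ → ℤ) : ι → K :=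
  A.mulVec fun j => (m j : K)

theorem latticeVec_injective {ι K : Type*} [Fintype ι] [DecidableEq ι] [CommRing K] [CharZero K]
    {A : Matrix ι ι K} (hA : IsUnit A.det) : Function.Injective (latticeVec A) := fun m m' h => by
  have hcast := Matrix.mulVec_injective_of_isUnit ((Matrix.isUnit_iff_isUnit_det A).2 hA) h
  exact funext fun i => Int.cast_injective (congrFun hcast i)

theorem latticeVec_cons {K : Type*} [Ring K] {n : ℕ} {A : Matrix (Fin (n + 1)) (Fin (n + 1)) K}
    (hA : A.IsUpperTriangular) (k : ℤ) (m : Fin n → ℤ) :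
    latticeVec A (Fin.cons k m : Fin (n + 1) → ℤ) =
      Fin.cons (A 0 0 * k + ∑ j : Fin n, A 0 j.succ * m j)
        (latticeVec (A.submatrix Fin.succ Fin.succ) m) := by
  have hcol (i : Fin n) : A i.succ 0 = 0 := hA (Fin.succ_pos i)
  ext i
  cases i using Fin.cases <;> simp [latticeVec, Matrix.mulVec, dotProduct, Fin.sum_univ_succ, hcol]

theorem isUpperTriangular_submatrix {ι κ K : Type*} [Preorder ι] [Preorder κ] [Zero K]
    {A : Matrix ι ι K} (hA : A.IsUpperTriangular) {f : κ → ι} (hf : StrictMono f) :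
    (A.submatrix f f).IsUpperTriangular :=
  fun _ _ hij => hA (hf hij)

section BackSubstitution

variable {K : Type*} [Ring K] [Preorder K] {n : ℕ}

theorem latticeVec_cons_mem_Icc {A : Matrix (Fin (n + 1)) (Fin (n + 1)) K}
    (hA : A.IsUpperTriangular) (l r : Fin (n + 1) → K) (k : ℤ) (m : Fin n → ℤ) :
    latticeVec A (Fin.cons k m : Fin (n + 1) → ℤ) ∈ Set.Icc l r ↔
      A 0 0 * k + ∑ j : Fin n, A 0 j.succ * m j ∈ Set.Icc (l 0) (r 0) ∧
        latticeVec (A.submatrix Fin.succ Fin.succ) m ∈ Set.Icc (Fin.tail l) (Fin.tail r) := by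
  rw [latticeVec_cons hA]
  simp only [Set.mem_Icc, Fin.le_cons, Fin.cons_le]
  tauto

/-- Back substitution: for upper triangular `A`, a lattice point in the box `Set.Icc l r` is a
lattice point of the lower right block in the remaining sides of the box, together with an integer
first coordinate. -/
def latticeVecPreimageIccEquiv {A : Matrix (Fin (n + 1)) (Fin (n + 1)) K}
    (hA : A.IsUpperTriangular) (l r : Fin (n + 1) → K) :
    latticeVec A ⁻¹' Set.Icc l r ≃
      Σ m : latticeVec (A.submatrix Fin.succ Fin.succ) ⁻¹' Set.Icc (Fin.tail l) (Fin.tail r),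
        {k : ℤ | A 0 0 * k + ∑ j : Fin n, A 0 j.succ * m.1 j ∈ Set.Icc (l 0) (r 0)} where
  toFun m :=
    have h := (latticeVec_cons_mem_Icc hA l r (m.1 0) (Fin.tail m.1)).1
      ((Fin.cons_self_tail m.1).symm ▸ m.2)
    ⟨⟨Fin.tail m.1, h.2⟩, ⟨m.1 0, h.1⟩⟩
  invFun p := ⟨Fin.cons p.2.1 p.1.1, (latticeVec_cons_mem_Icc hA l r _ _).2 ⟨p.2.2, p.1.2⟩⟩
  left_inv m := Subtype.ext (Fin.cons_self_tail m.1)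
  right_inv _ := rfl

end BackSubstitution

section LatticePointsInBox

variable {K : Type*} [Field K] [LinearOrder K] [IsStrictOrderedRing K] [FloorRing K] {n : ℕ}

theorem finite_latticeVec_preimage_Icc {A : Matrix (Fin n) (Fin n) K} (hA : A.IsUpperTriangular)
    (hpos : ∀ i, 0 < A i i) (l r : Fin n → K) : (latticeVec A ⁻¹' Set.Icc l r).Finite := by
  induction n with
  | zero => exact Set.toFinite _
  | succ n ih =>
    have := (ih (isUpperTriangular_submatrix hA Fin.strictMono_succ) (fun i => hpos i.succ)
      (Fin.tail l) (Fin.tail r)).to_subtype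
    have (w : K) := (finite_setOf_mul_intCast_add_mem_Icc (hpos 0) w (l 0) (r 0)).to_subtype
    exact Finite.of_equiv _ (latticeVecPreimageIccEquiv hA l r).symm

theorem prod_floor_le_ncard_latticeVec_preimage_Icc {A : Matrix (Fin n) (Fin n) K}
    (hA : A.IsUpperTriangular) (hpos : ∀ i, 0 < A i i) (l r : Fin n → K) :
    ∏ i, ⌊(r i - l i) / A i i⌋₊ ≤ (latticeVec A ⁻¹' Set.Icc l r).ncard := by
  induction n with
  | zero =>
    have huniv : latticeVec A ⁻¹' Set.Icc l r = Set.univ :=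
      Set.eq_univ_of_forall fun _ => ⟨finZeroElim, finZeroElim⟩
    simp [huniv]
  | succ n ih =>
    have hA' := isUpperTriangular_submatrix hA Fin.strictMono_succ
    have hpos' (i : Fin n) : 0 < A.submatrix Fin.succ Fin.succ i i := hpos i.succ
    have := (finite_latticeVec_preimage_Icc hA' hpos' (Fin.tail l) (Fin.tail r)).to_subtype
    have (w : K) := (finite_setOf_mul_intCast_add_mem_Icc (hpos 0) w (l 0) (r 0)).to_subtype
    rw [← Nat.card_coe_set_eq, Nat.card_congr (latticeVecPreimageIccEquiv hA l r),
      Fin.prod_univ_succ]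
    exact (Nat.mul_le_mul_left _ (ih hA' hpos' (Fin.tail l) (Fin.tail r))).trans <|
      mul_card_le_card_sigma fun _ => floor_le_ncard_setOf_mul_intCast_add_mem_Icc (hpos 0) _ _ _

theorem ncard_latticeVec_preimage_Icc_le_prod_floor_add_one {A : Matrix (Fin n) (Fin n) K}
    (hA : A.IsUpperTriangular) (hpos : ∀ i, 0 < A i i) (l r : Fin n → K) :
    (latticeVec A ⁻¹' Set.Icc l r).ncard ≤ ∏ i, (⌊(r i - l i) / A i i⌋₊ + 1) := by
  induction n with
  | zero => exact Set.ncard_le_one_of_subsingleton _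
  | succ n ih =>
    have hA' := isUpperTriangular_submatrix hA Fin.strictMono_succ
    have hpos' (i : Fin n) : 0 < A.submatrix Fin.succ Fin.succ i i := hpos i.succ
    have := (finite_latticeVec_preimage_Icc hA' hpos' (Fin.tail l) (Fin.tail r)).to_subtype
    have (w : K) := (finite_setOf_mul_intCast_add_mem_Icc (hpos 0) w (l 0) (r 0)).to_subtype
    rw [← Nat.card_coe_set_eq, Nat.card_congr (latticeVecPreimageIccEquiv hA l r),
      Fin.prod_univ_succ]
    exact (card_sigma_le_mul_card fun _ =>
      ncard_setOf_mul_intCast_add_mem_Icc_le (hpos 0) _ _ _).trans <|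
        Nat.mul_le_mul_left _ (ih hA' hpos' (Fin.tail l) (Fin.tail r))

end LatticePointsInBox

section OrderedCommRing

variable {K : Type*} [CommRing K] [LinearOrder K] [IsStrictOrderedRing K]

theorem card_lattice_inter_cube_eq_ncard {ι : Type*} [Fintype ι] [DecidableEq ι]
    {A : Matrix ι ι K} (hA : IsUnit A.det) (z : ι → K) (R : K) :
    Nat.card {x : ι → K //
        (∃ m : ι → ℤ, A.mulVec (fun i => (m i : K)) = x) ∧ ∀ i, |x i - z i| ≤ R} =
      (latticeVec A ⁻¹' Set.Icc (fun i => z i - R) (fun i => z i + R)).ncard := by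
  have hcube : {x : ι → K | ∀ i, |x i - z i| ≤ R} =
      Set.Icc (fun i => z i - R) (fun i => z i + R) := by
    ext x
    simp only [Set.mem_ofPred_eq, Set.mem_Icc, Pi.le_def, ← forall_and, abs_sub_le_iff,
      sub_le_iff_le_add, add_comm, and_comm]
  rw [← hcube, ← Set.ncard_image_of_injective _ (latticeVec_injective hA),
    Set.image_preimage_eq_range_inter]
  rfl

theorem det_pos_of_isUpperTriangular {ι : Type*} [Fintype ι] [LinearOrder ι] {A : Matrix ι ι K}
    (hupper : A.IsUpperTriangular) (hpos : ∀ i, 0 < A i i) : 0 < A.det :=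
  Matrix.det_of_isUpperTriangular hupper ▸ Finset.prod_pos fun i _ => hpos i

end OrderedCommRing

theorem div_mul_prod_div_diag {K : Type*} [Field K] {n : ℕ} {c : K} {A : Matrix (Fin n) (Fin n) K}
    (hn : 1 ≤ n) (hc : c ≠ 0) (hupper : A.IsUpperTriangular) (t : K) :
    t / c * ∏ i, c / A i i = t * c ^ (n - 1) / A.det := by
  obtain ⟨k, rfl⟩ := Nat.exists_eq_add_of_le' hn
  rw [Finset.prod_div_distrib, ← Matrix.det_of_isUpperTriangular hupper, Fin.prod_const,
    Nat.add_sub_cancel, pow_succ]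
  field_simp

section LatticePointsInCube

variable {K : Type*} [Field K] [LinearOrder K] [IsStrictOrderedRing K] [FloorRing K]
  {n : ℕ} {c : K} {A : Matrix (Fin n) (Fin n) K}

theorem mul_pow_le_prod_floor_div_diag (hn : 1 ≤ n) (hc : 0 < c) (hupper : A.IsUpperTriangular)
    (hdiag : ∀ i, c ≤ A i i) {t : K} (ht : c ≤ t) :
    (t * c ^ (n - 1) / A.det - 1) * (t / c - 1) ^ (n - 1) ≤ ∏ i, (⌊t / A i i⌋₊ : K) := by
  have hpos (i : Fin n) : 0 < A i i := hc.trans_le (hdiag i)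
  have := Fin.pos_iff_nonempty.1 hn
  rw [← div_mul_prod_div_diag hn hc.ne' hupper]
  simpa only [Finset.card_univ, Fintype.card_fin] using
    mul_prod_sub_one_mul_pow_le_prod ((one_le_div hc).2 ht) Finset.univ_nonempty
      (fun i _ => (div_pos hc (hpos i)).le) (fun i _ => (div_le_one (hpos i)).2 (hdiag i))
      (fun i _ => Nat.cast_nonneg _) fun i _ => by
        rw [div_mul_div_cancel₀ hc.ne']
        exact (Nat.sub_one_lt_floor _).le

theorem prod_floor_div_diag_add_one_le_mul_pow (hn : 1 ≤ n) (hc : 0 < c)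
    (hupper : A.IsUpperTriangular) (hdiag : ∀ i, c ≤ A i i) {t : K} (ht : 0 ≤ t) :
    ∏ i, ((⌊t / A i i⌋₊ : K) + 1) ≤
      (t * c ^ (n - 1) / A.det + 1) * (t / c + 1) ^ (n - 1) := by
  have hpos (i : Fin n) : 0 < A i i := hc.trans_le (hdiag i)
  have := Fin.pos_iff_nonempty.1 hn
  rw [← div_mul_prod_div_diag hn hc.ne' hupper]
  simpa only [Finset.card_univ, Fintype.card_fin] using
    prod_le_mul_prod_add_one_mul_pow (div_nonneg ht hc.le) Finset.univ_nonempty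
      (fun i _ => (div_pos hc (hpos i)).le) (fun i _ => (div_le_one (hpos i)).2 (hdiag i))
      (fun i _ => by positivity) fun i _ => by
        rw [div_mul_div_cancel₀ hc.ne']
        exact add_le_add_left (Nat.floor_le (div_nonneg ht (hpos i).le)) 1

theorem lattice_points_in_cube_general (hn : 1 ≤ n) (hc : 0 < c) (hupper : A.IsUpperTriangular)
    (hdiag : ∀ i, c ≤ A i i) {R : K} (hcR : c ≤ 2 * R) (z : Fin n → K) :
    (2 * R * c ^ (n - 1) / |A.det| - 1) * (2 * R / c - 1) ^ (n - 1) ≤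
      (Nat.card {x : Fin n → K //
        (∃ m : Fin n → ℤ, A.mulVec (fun i => (m i : K)) = x) ∧ ∀ i, |x i - z i| ≤ R} : K) ∧
    (Nat.card {x : Fin n → K //
        (∃ m : Fin n → ℤ, A.mulVec (fun i => (m i : K)) = x) ∧ ∀ i, |x i - z i| ≤ R} : K) ≤
      (2 * R * c ^ (n - 1) / |A.det| + 1) * (2 * R / c + 1) ^ (n - 1) := by
  have hpos (i : Fin n) : 0 < A i i := hc.trans_le (hdiag i)
  have hdet : 0 < A.det := det_pos_of_isUpperTriangular hupper hpos
  have hside (i : Fin n) : z i + R - (z i - R) = 2 * R := by ring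
  have hle_count := prod_floor_le_ncard_latticeVec_preimage_Icc hupper hpos
    (fun i => z i - R) (fun i => z i + R)
  have hcount_le := ncard_latticeVec_preimage_Icc_le_prod_floor_add_one hupper hpos
    (fun i => z i - R) (fun i => z i + R)
  simp only [hside] at hle_count hcount_le
  rw [abs_of_pos hdet, card_lattice_inter_cube_eq_ncard hdet.ne'.isUnit]
  exact ⟨(mul_pow_le_prod_floor_div_diag hn hc hupper hdiag hcR).trans (mod_cast hle_count),
    le_trans (mod_cast hcount_le)
      (prod_floor_div_diag_add_one_le_mul_pow hn hc hupper hdiag (hc.le.trans hcR))⟩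

end LatticePointsInCube

/-- **Counting lattice points in a translated cube** (Lemma 5.1 of the paper).
Let `Λ ⊆ ℝ^n` be the full-rank lattice spanned over `ℤ` by the columns of an upper-triangular
matrix `A` whose diagonal entries are all at least `c > 0`, and let `Δ = |det A|` be its
determinant. If `R ≥ 1` and `2R ≥ max{Δ/c^{n-1}, c}`, then for every `z ∈ ℝ^n` the number of
points of `Λ` in the cube of side length `2R` centered at `z` is between
`(2Rc^{n-1}/Δ - 1)(2R/c - 1)^{n-1}` and `(2Rc^{n-1}/Δ + 1)(2R/c + 1)^{n-1}`. -/
theorem lattice_points_in_cube {n : ℕ} (hn : 1 ≤ n) (R c : ℝ) (hR : 1 ≤ R) (hc : 0 < c)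
    (A : Matrix (Fin n) (Fin n) ℝ)
    (hupper : Matrix.BlockTriangular A id)
    (hdiag : ∀ i, c ≤ A i i)
    (h2R : max (|A.det| / c ^ (n - 1)) c ≤ 2 * R)
    (z : Fin n → ℝ) :
    (2 * R * c ^ (n - 1) / |A.det| - 1) * (2 * R / c - 1) ^ (n - 1) ≤
      (Nat.card {x : Fin n → ℝ //
        (∃ m : Fin n → ℤ, A.mulVec (fun i => (m i : ℝ)) = x) ∧ ∀ i, |x i - z i| ≤ R} : ℝ) ∧
    (Nat.card {x : Fin n → ℝ //
        (∃ m : Fin n → ℤ, A.mulVec (fun i => (m i : ℝ)) = x) ∧ ∀ i, |x i - z i| ≤ R} : ℝ) ≤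
      (2 * R * c ^ (n - 1) / |A.det| + 1) * (2 * R / c + 1) ^ (n - 1) := by
  exact lattice_points_in_cube_general hn hc hupper hdiag ((le_max_right _ _).trans h2R) z
end

section
/- Let 1 ≤ l ≤ n−1 and suppose Λ ⊆ ℤ^n is a lattice (subgroup) of rank n−l. Let Δ be the maximum of the absolute values of the Grassmann coordinates of Λ, i.e., of the (n−l)×(n−l) minors of a basis matrix of Λ. Then for every R that is a positive integer multiple of (n−l)Δ, one has (2R)^{n−l}/((n−l)^{n−l} Δ) ≤ |Λ ∩ C_R^n| ≤ (2R/Δ + 1)(2R + 1)^{n−l−1}, where C_R^n = {x ∈ ℝ^n : max_{1≤i≤n} |x_i| ≤ R}. Moreover, the upper bound |Λ ∩ C_R^n| ≤ (2R/Δ + 1)(2R + 1)^{n−l−1} holds for every real R ≥ 1, not necessarily an integer multiple of (n−l)Δ. -/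
/-!
Write `r = n - l` and choose `r` rows of the basis matrix whose minor has the maximal absolute value
`Δ`. By maximality and Cramer's rule, every coordinate of a point of `Λ` is a combination, with
coefficients in `[-1, 1]`, of its `r` chosen coordinates. Hence restriction to these coordinates
identifies `Λ` with a sublattice `L` of `ℤ^r` of index `Δ`, maps `C_R` into `C_R`, and every point
of `L ∩ C_{R/r}` comes from a point of `Λ ∩ C_R`.

For the lower bound, `L` contains `N ℤ^r` when `Δ ∣ N`, so it has at least `N^r / Δ` points in the
cube of side `N`. For the upper bound, let `d` be the index in `ℤ` of the group of first coordinates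
of `L`, and `e` that of the slice of `L` at first coordinate zero, so that `Δ = e d`. A translate
of `L` meets the cube in at most `2R/d + 1` slices, each of which is bounded by induction, and
`(x/e + 1)(x/d + 1) ≤ (x/(ed) + 1)(x + 1)` closes the induction.
-/

open Finset Matrix

section Minors

variable {R ι κ : Type*} [CommRing R]

theorem exists_submatrix_det_ne_zero [IsDomain R] [Finite ι] [Fintype κ] [DecidableEq κ]
    (B : Matrix ι κ R) (hB : LinearIndependent R B.col) :
    ∃ f : κ → ι, (B.submatrix f id).det ≠ 0 := by
  have := Fintype.ofFinite ι
  let K := FractionRing R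
  let C : Matrix ι κ K := B.map (algebraMap R K)
  have hC : LinearIndependent K C.col := by
    rw [← LinearIndependent.iff_fractionRing R K]
    refine hB.map_injOn ((Algebra.linearMap R K).compLeft ι) fun v _ w _ hvw => funext fun i => ?_
    exact FaithfulSMul.algebraMap_injective R K (congrFun hvw i)
  obtain ⟨κ', a, ha, hspan, hrows⟩ := exists_linearIndependent' K C.row
  have : Finite κ' := .of_injective a ha
  have : Fintype κ' := .ofFinite κ'
  have hcard : Fintype.card κ = Fintype.card κ' := by
    rw [← hC.rank_matrix, rank_transpose, rank_eq_finrank_span_row, ← hspan,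
      finrank_span_eq_card hrows]
  let e : κ ≃ κ' := Fintype.equivOfCardEq hcard
  have hunit : IsUnit (C.submatrix (a ∘ e) id).det := by
    rw [← isUnit_iff_isUnit_det, ← linearIndependent_rows_iff_isUnit]
    exact hrows.comp e e.injective
  refine ⟨a ∘ e, fun hdet => hunit.ne_zero ?_⟩
  rw [← map_zero (algebraMap R K), ← hdet, RingHom.map_det]
  rfl

theorem abs_det_submatrix_le_of_forall_orderEmbOfFin [LinearOrder R] [IsStrictOrderedRing R]
    [LinearOrder ι] {r : ℕ} {B : Matrix ι (Fin r) R} {Δ : R} (hΔ₀ : 0 ≤ Δ)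
    (hΔ : ∀ (s : Finset ι) (hs : #s = r), |(B.submatrix (s.orderEmbOfFin hs) id).det| ≤ Δ)
    (f : Fin r → ι) : |(B.submatrix f id).det| ≤ Δ := by
  by_cases hf : f.Injective
  · have hmono : StrictMono (f ∘ Tuple.sort f) :=
      (Tuple.monotone_sort f).strictMono_of_injective (hf.comp (Tuple.sort f).injective)
    have hcard : #(univ.image f) = r := by simp [card_image_of_injective _ hf]
    have hsorted : f ∘ Tuple.sort f = (univ.image f).orderEmbOfFin hcard :=
      orderEmbOfFin_unique hcard (fun i => mem_image_of_mem f (mem_univ _)) hmono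
    calc |(B.submatrix f id).det|
        = |((B.submatrix f id).submatrix (Tuple.sort f) (Equiv.refl _)).det| :=
          (abs_det_submatrix_equiv_equiv _ _ _).symm
      _ = |(B.submatrix ((univ.image f).orderEmbOfFin hcard) id).det| := by rw [← hsorted]; rfl
      _ ≤ Δ := hΔ _ hcard
  · obtain ⟨i, j, hij, hne⟩ := Function.not_injective_iff.mp hf
    rw [det_zero_of_row_eq hne (congrArg B hij), abs_zero]
    exact hΔ₀

theorem exists_maximal_minor [LinearOrder R] [IsStrictOrderedRing R] [LinearOrder ι] [Finite ι]
    {r : ℕ} {B : Matrix ι (Fin r) R} (hB : LinearIndependent R B.col) {Δ : R}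
    (hΔ : IsGreatest {d : R | ∃ (s : Finset ι) (hs : #s = r),
      d = |(B.submatrix (fun i => s.orderEmbOfFin hs i) id).det|} Δ) :
    ∃ f : Fin r → ι, |(B.submatrix f id).det| = Δ ∧ (B.submatrix f id).det ≠ 0 ∧
      ∀ g : Fin r → ι, |(B.submatrix g id).det| ≤ |(B.submatrix f id).det| := by
  obtain ⟨⟨s, hs, rfl⟩, hmax⟩ := hΔ
  have hle := abs_det_submatrix_le_of_forall_orderEmbOfFin (abs_nonneg _)
    fun t ht => hmax ⟨t, ht, rfl⟩
  obtain ⟨g, hg⟩ := exists_submatrix_det_ne_zero B hB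
  exact ⟨_, rfl, abs_pos.mp ((abs_pos.mpr hg).trans_le (hle g)), hle⟩

variable [Fintype κ] [DecidableEq κ]

theorem det_submatrix_mul_mulVec_apply (B : Matrix ι κ R) (f : κ → ι) (m : κ → R) (i : ι) :
    (B.submatrix f id).det * (B *ᵥ m) i =
      ∑ j, (B.submatrix (Function.update f j i) id).det * (B *ᵥ m) (f j) := by
  set A := B.submatrix f id
  have hrow (j : κ) : (B i ᵥ* A.adjugate) j = (B.submatrix (Function.update f j i) id).det := by
    rw [← mulVec_transpose, adjugate_transpose, ← cramer_eq_adjugate_mulVec,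
      cramer_transpose_apply]
    congr 1
    ext a b
    by_cases h : a = j <;> simp [updateRow_apply, h, A]
  calc A.det * (B *ᵥ m) i = B i ⬝ᵥ (A.adjugate *ᵥ (A *ᵥ m)) := by
        rw [mulVec_mulVec, adjugate_mul, smul_mulVec, one_mulVec, dotProduct_smul, smul_eq_mul]
        rfl
    _ = ∑ j, (B.submatrix (Function.update f j i) id).det * (B *ᵥ m) (f j) := by
        rw [dotProduct_mulVec]
        exact sum_congr rfl fun j _ => by rw [hrow]; rfl

theorem abs_mulVec_apply_le_sum [LinearOrder R] [IsStrictOrderedRing R] {B : Matrix ι κ R}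
    {f : κ → ι} (hdet : (B.submatrix f id).det ≠ 0)
    (hmax : ∀ g : κ → ι, |(B.submatrix g id).det| ≤ |(B.submatrix f id).det|)
    (m : κ → R) (i : ι) : |(B *ᵥ m) i| ≤ ∑ j, |(B *ᵥ m) (f j)| := by
  refine le_of_mul_le_mul_left ?_ (abs_pos.mpr hdet)
  calc |(B.submatrix f id).det| * |(B *ᵥ m) i|
      = |∑ j, (B.submatrix (Function.update f j i) id).det * (B *ᵥ m) (f j)| := by
        rw [← abs_mul, det_submatrix_mul_mulVec_apply]
    _ ≤ ∑ j, |(B.submatrix (Function.update f j i) id).det| * |(B *ᵥ m) (f j)| := by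
        simp only [← abs_mul]
        exact abs_sum_le_sum_abs _ _
    _ ≤ ∑ j, |(B.submatrix f id).det| * |(B *ᵥ m) (f j)| :=
        sum_le_sum fun j _ => mul_le_mul_of_nonneg_right (hmax _) (abs_nonneg _)
    _ = |(B.submatrix f id).det| * ∑ j, |(B *ᵥ m) (f j)| := (mul_sum ..).symm

end Minors

section CubePoints

variable {ι κ : Type*}

/-- The points of the lattice `L ⊆ ℤ^ι` in the cube of side `2R` centred at the origin. -/
def cubePoints (L : AddSubgroup (ι → ℤ)) (R : ℝ) : Set (ι → ℤ) :=
  {x | x ∈ L ∧ ∀ i, |(x i : ℝ)| ≤ R}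

theorem cubePoints_finite [Finite ι] (L : AddSubgroup (ι → ℤ)) (R : ℝ) :
    (cubePoints L R).Finite := by
  have := Fintype.ofFinite ι
  classical
  refine (Set.finite_Icc (fun _ => -⌊R⌋) (fun _ => ⌊R⌋)).subset fun x hx => ?_
  have hfloor (i : ι) : |x i| ≤ ⌊R⌋ := Int.le_floor.mpr (by simpa using hx.2 i)
  exact ⟨fun i => (abs_le.mp (hfloor i)).1, fun i => (abs_le.mp (hfloor i)).2⟩

/- `L` is the preimage of a subgroup of `(ℤ/N)^κ` of the same index, and each element of that
subgroup lifts to the cube through its representatives of least absolute value. -/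
theorem pow_card_le_index_mul_ncard_cubePoints [Fintype κ] (L : AddSubgroup (κ → ℤ)) {N : ℕ}
    [NeZero N] (hN : ∀ v, N • v ∈ L) :
    N ^ Fintype.card κ ≤ L.index * (cubePoints L (N / 2)).ncard := by
  let reduce : (κ → ℤ) →+ (κ → ZMod N) := (Int.castAddHom (ZMod N)).compLeft κ
  have hsurj : Function.Surjective reduce := fun z =>
    ⟨fun i => (z i).valMinAbs, funext fun i => (z i).coe_valMinAbs⟩
  have hker : reduce.ker ≤ L := fun x hx => by
    choose q hq using fun i => (ZMod.intCast_zmod_eq_zero_iff_dvd (x i) N).mp (congrFun hx i)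
    convert hN q
    ext i
    simp [hq]
  have hmap : (L.map reduce : Set (κ → ZMod N)) ⊆ reduce '' cubePoints L (N / 2) := by
    rintro _ ⟨x, hx, rfl⟩
    have hlift : reduce (fun i => (reduce x i).valMinAbs) = reduce x :=
      funext fun i => (reduce x i).coe_valMinAbs
    refine ⟨_, ⟨?_, fun i => ?_⟩, hlift⟩
    · simpa using L.add_mem (hker ((AddMonoidHom.sub_mem_ker_iff _).mpr hlift)) hx
    · have := ZMod.natAbs_valMinAbs_le (reduce x i)
      rw [← Int.cast_abs, Int.abs_eq_natAbs, Int.cast_natCast]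
      exact (Nat.cast_le.mpr this).trans Nat.cast_div_le
  calc N ^ Fintype.card κ = (L.map reduce).index * Nat.card (L.map reduce) := by
        rw [AddSubgroup.index_mul_card, Nat.card_fun, Nat.card_zmod, Nat.card_eq_fintype_card]
    _ ≤ L.index * (cubePoints L (N / 2)).ncard := by
        rw [AddSubgroup.index_map_eq _ hsurj hker]
        refine Nat.mul_le_mul_left _ ?_
        exact (Set.ncard_le_ncard hmap).trans (Set.ncard_image_le (cubePoints_finite _ _))

end CubePoints

section Slicing

theorem index_comap_mul_index_map_of_exact {A B C : Type*} [AddGroup A] [AddCommGroup B]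
    [AddGroup C] {f : A →+ B} {g : B →+ C} (hg : Function.Surjective g) (hfg : f.range = g.ker)
    (L : AddSubgroup B) : (L.comap f).index * (L.map g).index = L.index := by
  rw [AddSubgroup.index_comap, AddSubgroup.index_map, g.range_eq_top_of_surjective hg,
    AddSubgroup.index_top, mul_one, hfg, ← AddSubgroup.relIndex_sup_left]
  exact AddSubgroup.relIndex_mul_index le_sup_left

theorem index_dvd_of_mem (H : AddSubgroup ℤ) {a : ℤ} (ha : a ∈ H) : (H.index : ℤ) ∣ a := by
  obtain ⟨g, rfl⟩ := Int.subgroup_cyclic H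
  rw [← AddSubgroup.zmultiples_eq_closure] at ha ⊢
  rw [Int.index_zmultiples, Int.natAbs_dvd]
  exact Int.mem_zmultiples_iff.mp ha

variable {r : ℕ}

/-- The subgroup of `ℤ` formed by the first coordinates of the points of `L`. -/
def headSubgroup (L : AddSubgroup (Fin (r + 1) → ℤ)) : AddSubgroup ℤ :=
  L.map (Pi.evalAddMonoidHom _ 0)

/-- The points of `L` on the hyperplane `x 0 = 0`, regarded as a subgroup of `ℤ^r`. -/
def zeroSlice (L : AddSubgroup (Fin (r + 1) → ℤ)) : AddSubgroup (Fin r → ℤ) :=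
  L.comap (LinearMap.vecCons (0 : (Fin r → ℤ) →ₗ[ℤ] ℤ) .id).toAddMonoidHom

theorem tail_mem_zeroSlice {L : AddSubgroup (Fin (r + 1) → ℤ)} {x : Fin (r + 1) → ℤ}
    (hx : x ∈ L) (hx₀ : x 0 = 0) : Fin.tail x ∈ zeroSlice L := by
  change Fin.cons 0 (Fin.tail x) ∈ L
  rwa [← hx₀, Fin.cons_self_tail]

theorem index_zeroSlice_mul_index_headSubgroup (L : AddSubgroup (Fin (r + 1) → ℤ)) :
    (zeroSlice L).index * (headSubgroup L).index = L.index := by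
  refine index_comap_mul_index_map_of_exact (fun a => ⟨fun _ => a, rfl⟩) ?_ L
  ext x
  refine ⟨?_, fun hx => ⟨Fin.tail x, ?_⟩⟩
  · rintro ⟨y, rfl⟩
    rfl
  · have hx₀ : x 0 = 0 := hx
    change Fin.cons 0 (Fin.tail x) = x
    rw [← hx₀, Fin.cons_self_tail]

end Slicing

section UpperBound

variable {D : ℝ} {r : ℕ}

theorem card_le_div_add_one_of_dvd_sub {s : Finset ℤ} {d : ℕ} (hd : d ≠ 0) (hD : 0 ≤ D)
    (hdvd : ∀ a ∈ s, ∀ b ∈ s, (d : ℤ) ∣ a - b) (hdiam : ∀ a ∈ s, ∀ b ∈ s, ((a - b : ℤ) : ℝ) ≤ D) :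
    (#s : ℝ) ≤ D / d + 1 := by
  have hd_pos : 0 < d := Nat.pos_of_ne_zero hd
  rcases s.eq_empty_or_nonempty with rfl | hne
  · simp only [card_empty, Nat.cast_zero]
    positivity
  let b := s.min' hne
  have hb : b ∈ s := s.min'_mem hne
  have hsub : s ⊆ (Icc 0 ⌊D / d⌋₊).image fun q : ℕ => b + d * q := fun a ha => by
    obtain ⟨q, hq⟩ := hdvd a ha b hb
    have hq₀ : 0 ≤ q := by
      have := s.min'_le a ha
      exact nonneg_of_mul_nonneg_right (by omega : 0 ≤ (d : ℤ) * q) (by exact_mod_cast hd_pos)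
    lift q to ℕ using hq₀
    refine mem_image.mpr ⟨q, mem_Icc.mpr ⟨q.zero_le, Nat.le_floor ?_⟩, by omega⟩
    rw [le_div_iff₀ (by exact_mod_cast hd_pos), mul_comm]
    simpa [hq] using hdiam a ha b hb
  calc (#s : ℝ) ≤ (⌊D / d⌋₊ + 1 : ℕ) := by
        exact_mod_cast (card_le_card hsub).trans (card_image_le.trans (by simp))
    _ ≤ D / d + 1 := by
        push_cast
        gcongr
        exact Nat.floor_le (by positivity)

theorem div_add_one_mul_div_add_one_le {a b : ℝ} (hD : 0 ≤ D) (ha : 1 ≤ a) (hb : 1 ≤ b) :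
    (D / a + 1) * (D / b + 1) ≤ (D / (a * b) + 1) * (D + 1) := by
  have hdefect : 0 ≤ D * ((1 - a⁻¹) * (1 - b⁻¹)) :=
    mul_nonneg hD (mul_nonneg (sub_nonneg.mpr (inv_le_one_of_one_le₀ ha))
      (sub_nonneg.mpr (inv_le_one_of_one_le₀ hb)))
  simp only [div_eq_mul_inv, mul_inv]
  linarith

theorem card_le_mul_of_forall_card_fiber_le {L : AddSubgroup (Fin (r + 1) → ℤ)}
    (hL : (headSubgroup L).index ≠ 0) (hD : 0 ≤ D) {s : Finset (Fin (r + 1) → ℤ)}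
    (hsub : ∀ x ∈ s, ∀ y ∈ s, x - y ∈ L)
    (hdiam : ∀ x ∈ s, ∀ y ∈ s, ∀ i, ((x i - y i : ℤ) : ℝ) ≤ D)
    {M : ℝ} (hM : ∀ a, (#{x ∈ s | x 0 = a} : ℝ) ≤ M) :
    (#s : ℝ) ≤ M * (D / (headSubgroup L).index + 1) := by
  have hM₀ : 0 ≤ M := (Nat.cast_nonneg _).trans (hM 0)
  have hheads : (#(s.image (· 0)) : ℝ) ≤ D / (headSubgroup L).index + 1 := by
    refine card_le_div_add_one_of_dvd_sub hL hD ?_ ?_ <;> simp only [forall_mem_image]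
    · exact fun x hx y hy => index_dvd_of_mem _ ⟨x - y, hsub x hx y hy, rfl⟩
    · exact fun x hx y hy => hdiam x hx y hy 0
  have hfibers : #s ≤ ⌊M⌋₊ * #(s.image (· 0)) :=
    card_le_mul_card_image s _ fun a _ => Nat.le_floor (hM a)
  calc (#s : ℝ) ≤ ⌊M⌋₊ * #(s.image (· 0)) := by exact_mod_cast hfibers
    _ ≤ M * (D / (headSubgroup L).index + 1) := by
        gcongr
        exact Nat.floor_le hM₀

theorem injOn_tail_filter_head (s : Finset (Fin (r + 1) → ℤ)) (a : ℤ) :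
    Set.InjOn Fin.tail (s.filter (· 0 = a) : Set (Fin (r + 1) → ℤ)) := fun x hx y hy hxy => by
  rw [← Fin.cons_self_tail x, ← Fin.cons_self_tail y, hxy, (mem_filter.mp hx).2,
    (mem_filter.mp hy).2]

/- Multiplying through by `D + 1` avoids the exponent `r - 1`, so that the induction can start at
`r = 0`. -/
theorem card_mul_le_of_sub_mem (hD : 0 ≤ D) {L : AddSubgroup (Fin r → ℤ)} (hL : L.index ≠ 0)
    {s : Finset (Fin r → ℤ)} (hsub : ∀ x ∈ s, ∀ y ∈ s, x - y ∈ L)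
    (hdiam : ∀ x ∈ s, ∀ y ∈ s, ∀ i, ((x i - y i : ℤ) : ℝ) ≤ D) :
    #s * (D + 1) ≤ (D / L.index + 1) * (D + 1) ^ r := by
  induction r with
  | zero =>
    have hindex : L.index = 1 := AddSubgroup.index_eq_one.mpr (Subsingleton.elim _ _)
    have hcard : (#s : ℝ) ≤ 1 := by exact_mod_cast card_le_one_of_subsingleton s
    simpa [hindex] using mul_le_mul_of_nonneg_right hcard (by linarith : 0 ≤ D + 1)
  | succ r ih =>
    have hindex := index_zeroSlice_mul_index_headSubgroup L
    obtain ⟨hslice, hhead⟩ := mul_ne_zero_iff.mp (hindex ▸ hL)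
    set e := (zeroSlice L).index
    set d := (headSubgroup L).index
    have hfiber (a : ℤ) :
        (#{x ∈ s | x 0 = a} : ℝ) ≤ (D / e + 1) * (D + 1) ^ r / (D + 1) := by
      rw [← card_image_of_injOn (injOn_tail_filter_head s _), le_div_iff₀ (by linarith)]
      refine ih hslice ?_ ?_ <;> simp only [forall_mem_image, mem_filter]
      · exact fun x hx z hz => tail_mem_zeroSlice (hsub x hx.1 z hz.1) (by simp [hx.2, hz.2])
      · exact fun x hx z hz i => hdiam x hx.1 z hz.1 i.succ
    calc #s * (D + 1)
        ≤ (D / e + 1) * (D + 1) ^ r / (D + 1) * (D / d + 1) * (D + 1) := by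
          gcongr
          exact card_le_mul_of_forall_card_fiber_le hhead hD hsub hdiam hfiber
      _ = (D / e + 1) * (D / d + 1) * (D + 1) ^ r := by field_simp
      _ ≤ (D / (e * d) + 1) * (D + 1) * (D + 1) ^ r := by
          refine mul_le_mul_of_nonneg_right ?_ (by positivity)
          exact div_add_one_mul_div_add_one_le hD
            (Nat.one_le_cast.mpr (Nat.pos_of_ne_zero hslice))
            (Nat.one_le_cast.mpr (Nat.pos_of_ne_zero hhead))
      _ = (D / L.index + 1) * (D + 1) ^ (r + 1) := by rw [← hindex]; push_cast; ring

theorem ncard_cubePoints_le (hr : r ≠ 0) {R : ℝ} (hR : 0 ≤ R) {L : AddSubgroup (Fin r → ℤ)}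
    (hL : L.index ≠ 0) :
    ((cubePoints L R).ncard : ℝ) ≤ (2 * R / L.index + 1) * (2 * R + 1) ^ (r - 1) := by
  rw [Set.ncard_eq_toFinset_card _ (cubePoints_finite L R)]
  refine le_of_mul_le_mul_right ?_ (by linarith : 0 < 2 * R + 1)
  rw [mul_assoc, pow_sub_one_mul hr]
  refine card_mul_le_of_sub_mem (by linarith) hL ?_ ?_ <;> simp only [Set.Finite.mem_toFinset]
  · exact fun x hx y hy => L.sub_mem hx.1 hy.1
  · intro x hx y hy i
    push_cast
    linarith [(abs_le.mp (hx.2 i)).2, (abs_le.mp (hy.2 i)).1]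

end UpperBound

section ColumnLattice

variable {ι κ : Type*} [Fintype κ]

/-- The lattice spanned by the columns of `B`. -/
def columnLattice (B : Matrix ι κ ℤ) : AddSubgroup (ι → ℤ) :=
  (LinearMap.range B.mulVecLin).toAddSubgroup

theorem comp_mem_columnLattice_submatrix {B : Matrix ι κ ℤ} {x : ι → ℤ} (hx : x ∈ columnLattice B)
    (f : κ → ι) : x ∘ f ∈ columnLattice (B.submatrix f id) := by
  obtain ⟨m, rfl⟩ := hx
  exact ⟨m, rfl⟩

variable [DecidableEq κ]

theorem index_columnLattice {A : Matrix κ κ ℤ} (hA : A.det ≠ 0) :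
    (columnLattice A).index = A.det.natAbs := by
  have hinj : Function.Injective A.mulVecLin := mulVec_injective_of_det_ne_zero hA
  rw [← LinearMap.det_toLin', toLin'_apply']
  exact (Submodule.natAbs_det_equiv _ (LinearEquiv.ofInjective A.mulVecLin hinj)).symm

theorem injOn_comp_columnLattice {B : Matrix ι κ ℤ} {f : κ → ι}
    (hdet : (B.submatrix f id).det ≠ 0) :
    Set.InjOn (fun x : ι → ℤ => x ∘ f) (columnLattice B) := by
  rintro _ ⟨m, rfl⟩ _ ⟨m', rfl⟩ h
  rw [mulVec_injective_of_det_ne_zero hdet h]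

theorem ncard_cubePoints_columnLattice_le_submatrix {B : Matrix ι κ ℤ} {f : κ → ι}
    (hdet : (B.submatrix f id).det ≠ 0) (R : ℝ) :
    (cubePoints (columnLattice B) R).ncard ≤
      (cubePoints (columnLattice (B.submatrix f id)) R).ncard :=
  Set.ncard_le_ncard_of_injOn (fun x => x ∘ f)
    (fun _ hx => ⟨comp_mem_columnLattice_submatrix hx.1 f, fun j => hx.2 (f j)⟩)
    ((injOn_comp_columnLattice hdet).mono fun _ hx => hx.1) (cubePoints_finite _ _)

theorem ncard_cubePoints_columnLattice_submatrix_le [Finite ι] {B : Matrix ι κ ℤ} {f : κ → ι}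
    (hdet : (B.submatrix f id).det ≠ 0)
    (hmax : ∀ g : κ → ι, |(B.submatrix g id).det| ≤ |(B.submatrix f id).det|) (R : ℝ) :
    (cubePoints (columnLattice (B.submatrix f id)) R).ncard ≤
      (cubePoints (columnLattice B) (Fintype.card κ * R)).ncard := by
  refine (Set.ncard_le_ncard ?_ ((cubePoints_finite _ _).image _)).trans
    (Set.ncard_image_le (f := fun x => x ∘ f) (cubePoints_finite _ _))
  rintro _ ⟨⟨m, rfl⟩, hm⟩
  refine ⟨B *ᵥ m, ⟨⟨m, rfl⟩, fun i => ?_⟩, rfl⟩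
  calc |((B *ᵥ m) i : ℝ)| ≤ ∑ j, |((B *ᵥ m) (f j) : ℝ)| := by
        exact_mod_cast abs_mulVec_apply_le_sum hdet hmax m i
    _ ≤ ∑ _j : κ, R := sum_le_sum fun j _ => hm j
    _ = Fintype.card κ * R := by simp

theorem pow_card_le_natAbs_det_mul_ncard_cubePoints [Finite ι] {B : Matrix ι κ ℤ} {f : κ → ι}
    (hdet : (B.submatrix f id).det ≠ 0)
    (hmax : ∀ g : κ → ι, |(B.submatrix g id).det| ≤ |(B.submatrix f id).det|)
    {k : ℕ} (hk : k ≠ 0) :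
    (2 * k * (B.submatrix f id).det.natAbs) ^ Fintype.card κ ≤ (B.submatrix f id).det.natAbs *
      (cubePoints (columnLattice B)
        (Fintype.card κ * (k * (B.submatrix f id).det.natAbs))).ncard := by
  have hindex := index_columnLattice hdet
  set L := columnLattice (B.submatrix f id)
  set d := (B.submatrix f id).det.natAbs
  have : NeZero (2 * k * d) := ⟨by simp [hk, d, hdet]⟩
  have hexp (v : κ → ℤ) : (2 * k * d) • v ∈ L := by
    rw [mul_nsmul, ← hindex]
    exact L.nsmul_index_mem _
  have hside : ((2 * k * d : ℕ) : ℝ) / 2 = k * d := by push_cast; ring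
  calc (2 * k * d) ^ Fintype.card κ
      ≤ L.index * (cubePoints L ((2 * k * d : ℕ) / 2)).ncard :=
        pow_card_le_index_mul_ncard_cubePoints L hexp
    _ ≤ d * (cubePoints (columnLattice B) (Fintype.card κ * (k * d))).ncard := by
        rw [hindex, hside]
        exact Nat.mul_le_mul_left _ (ncard_cubePoints_columnLattice_submatrix_le hdet hmax _)

theorem pow_div_le_ncard_cubePoints_columnLattice [Finite ι] {B : Matrix ι κ ℤ} {f : κ → ι}
    (hdet : (B.submatrix f id).det ≠ 0)
    (hmax : ∀ g : κ → ι, |(B.submatrix g id).det| ≤ |(B.submatrix f id).det|)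
    {k : ℕ} (hk : k ≠ 0) {R : ℝ}
    (hR : R = (k * Fintype.card κ : ℕ) * (|(B.submatrix f id).det| : ℤ)) :
    (2 * R) ^ Fintype.card κ /
        ((Fintype.card κ : ℝ) ^ Fintype.card κ * (|(B.submatrix f id).det| : ℤ)) ≤
      (cubePoints (columnLattice B) R).ncard := by
  have hcount := pow_card_le_natAbs_det_mul_ncard_cubePoints hdet hmax hk
  have hd : 0 < (B.submatrix f id).det.natAbs := Int.natAbs_pos.mpr hdet
  rw [Int.abs_eq_natAbs, Int.cast_natCast] at hR ⊢
  set d := (B.submatrix f id).det.natAbs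
  set c := Fintype.card κ
  have hR' : R = c * (k * d) := by rw [hR]; push_cast; ring
  have hc : (0 : ℝ) < (c : ℝ) ^ c := by exact_mod_cast Nat.pow_self_pos
  rw [div_le_iff₀ (by positivity)]
  calc (2 * R) ^ c = (c : ℝ) ^ c * (2 * k * d) ^ c := by rw [← mul_pow, hR']; ring
    _ ≤ (c : ℝ) ^ c * (d * (cubePoints (columnLattice B) R).ncard) := by
        rw [hR']
        gcongr
        exact_mod_cast hcount
    _ = (cubePoints (columnLattice B) R).ncard * ((c : ℝ) ^ c * d) := by ring

theorem ncard_cubePoints_columnLattice_le {r : ℕ} (hr : r ≠ 0) {B : Matrix ι (Fin r) ℤ}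
    {f : Fin r → ι} (hdet : (B.submatrix f id).det ≠ 0) {R : ℝ} (hR : 0 ≤ R) :
    ((cubePoints (columnLattice B) R).ncard : ℝ) ≤
      (2 * R / (|(B.submatrix f id).det| : ℤ) + 1) * (2 * R + 1) ^ (r - 1) := by
  have hindex := index_columnLattice hdet
  calc ((cubePoints (columnLattice B) R).ncard : ℝ)
      ≤ (cubePoints (columnLattice (B.submatrix f id)) R).ncard :=
        Nat.cast_le.mpr (ncard_cubePoints_columnLattice_le_submatrix hdet R)
    _ ≤ _ := by
        rw [Int.abs_eq_natAbs, Int.cast_natCast, ← hindex]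
        exact ncard_cubePoints_le hr hR (hindex ▸ Int.natAbs_ne_zero.mpr hdet)

end ColumnLattice

theorem card_subtype_eq_ncard_cubePoints {ι κ : Type*} [Fintype κ] (B : Matrix ι κ ℤ) (R : ℝ) :
    Nat.card {x : ι → ℤ // (∃ m : κ → ℤ, B.mulVec m = x) ∧ ∀ i, |((x i : ℤ) : ℝ)| ≤ R} =
      (cubePoints (columnLattice B) R).ncard :=
  Nat.card_coe_set_eq _

/-- **Counting points of a sublattice of `ℤ^n` in a cube** (Lemma 6.1 of the paper;
Theorems 4.2 and 4.3 of [Fukshansky, "classical"]). Let `Λ ⊆ ℤ^n` be the lattice of rank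
`n - l` spanned by the linearly independent columns of an integer matrix `B`, and let `Δ` be
the maximum of the absolute values of the `(n-l) × (n-l)` minors (Grassmann coordinates) of
`B`. Then for every `R` which is a positive integer multiple of `(n-l)Δ`,
`(2R)^{n-l}/((n-l)^{n-l}Δ) ≤ |Λ ∩ C_R^n| ≤ (2R/Δ + 1)(2R + 1)^{n-l-1}`, and the upper bound
holds for every real `R ≥ 1`. -/
theorem sublattice_points_in_cube {n l : ℕ} (hl : 1 ≤ l) (hln : l ≤ n - 1)
    (B : Matrix (Fin n) (Fin (n - l)) ℤ)
    (hB : LinearIndependent ℤ (fun j => (fun i => B i j)))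
    (Δ : ℤ)
    (hΔ : IsGreatest {d : ℤ | ∃ (s : Finset (Fin n)) (hs : s.card = n - l),
      d = |(B.submatrix (fun i => s.orderEmbOfFin hs i) id).det|} Δ) :
    (∀ k : ℕ, 0 < k → ∀ R : ℝ, R = ((k * (n - l) : ℕ) : ℝ) * (Δ : ℝ) →
      (2 * R) ^ (n - l) / (((n - l : ℕ) : ℝ) ^ (n - l) * (Δ : ℝ)) ≤
        (Nat.card {x : Fin n → ℤ //
          (∃ m : Fin (n - l) → ℤ, B.mulVec m = x) ∧ ∀ i, |((x i : ℤ) : ℝ)| ≤ R} : ℝ) ∧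
      (Nat.card {x : Fin n → ℤ //
          (∃ m : Fin (n - l) → ℤ, B.mulVec m = x) ∧ ∀ i, |((x i : ℤ) : ℝ)| ≤ R} : ℝ) ≤
        (2 * R / (Δ : ℝ) + 1) * (2 * R + 1) ^ (n - l - 1)) ∧
    (∀ R : ℝ, 1 ≤ R →
      (Nat.card {x : Fin n → ℤ //
          (∃ m : Fin (n - l) → ℤ, B.mulVec m = x) ∧ ∀ i, |((x i : ℤ) : ℝ)| ≤ R} : ℝ) ≤
        (2 * R / (Δ : ℝ) + 1) * (2 * R + 1) ^ (n - l - 1)) := by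
  obtain ⟨f, rfl, hdet, hmax⟩ := exists_maximal_minor hB hΔ
  have hupper (R : ℝ) (hR : 0 ≤ R) :=
    ncard_cubePoints_columnLattice_le (by omega) hdet hR
  simp only [card_subtype_eq_ncard_cubePoints]
  refine ⟨fun k hk R hR => ⟨?_, hupper R (by rw [hR]; positivity)⟩,
    fun R hR => hupper R (by linarith)⟩
  simpa only [Fintype.card_fin] using
    pow_div_le_ncard_cubePoints_columnLattice hdet hmax hk.ne' (by rwa [Fintype.card_fin])
end
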